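/- Solutions have limits at infinity when ε₀ ≠ 0: Let β > 0, γ ∈ (1/2,1), ε₀ ∈ ℝ \ {0}, and let R : [0,∞) → M^{2×2}(ℂ) satisfy ‖R(x)‖ ≤ c_r/(x+1)^{1+α} with c_r, α > 0. Then every solution of u′(x) = ( (β/x^γ) M(ε₀ x) + R(x) ) u(x), where M(θ) = [[cos θ, sin θ],[sin θ, −cos θ]], has a finite limit as x → +∞, and the limit is nonzero for any nonzero solution. -/

import Mathlib

open MeasureTheory Real Filter Topology

/-!
Harris–Lutz transformation. The oscillating coefficient `ρ(x) M(ε₀ x)`, `ρ(x) = β / x ^ γ`, equals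
`W'` up to the integrable error `ρ' S`, where `W = ρ S` and `S` is a bounded antiderivative of
`M(ε₀ ·)`; in particular `W → 0`. For a solution of `u' = A u` the function `v = u - W u` satisfies
`v' = (A - W' - W A) u`, and `W A` is integrable because `2γ > 1`. As `‖u‖ ≤ 2‖v‖` near infinity,
`v` solves a differential inequality `‖v'‖ ≤ k ‖v‖` with `k` integrable. Where the tail of `k` has
mass at most `1/2`, the values of `‖v‖` differ by a factor at most `2`; hence `v` converges, its
limit vanishes only if `v` vanishes near infinity, and `u - v = W u → 0`. Solutions are only
absolutely continuous, so the transformation uses the product rule in integrated form.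
-/

section AbsoluteContinuity

theorem absolutelyContinuousOnInterval_of_dist_le {X Y Z : Type*} [PseudoMetricSpace X]
    [PseudoMetricSpace Y] [PseudoMetricSpace Z] {f : ℝ → X} {g : ℝ → Y} {h : ℝ → Z} {a b C D : ℝ}
    (hf : AbsolutelyContinuousOnInterval f a b) (hg : AbsolutelyContinuousOnInterval g a b)
    (hle : ∀ x ∈ Set.uIcc a b, ∀ y ∈ Set.uIcc a b,
      dist (h x) (h y) ≤ C * dist (f x) (f y) + D * dist (g x) (g y)) :
    AbsolutelyContinuousOnInterval h a b := by
  have hlim := (Tendsto.const_mul C hf).add (Tendsto.const_mul D hg)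
  rw [mul_zero, mul_zero, add_zero] at hlim
  refine squeeze_zero' (Eventually.of_forall fun _ => Finset.sum_nonneg fun _ _ => dist_nonneg)
    ?_ hlim
  filter_upwards [mem_inf_of_right (mem_principal_self _)] with I hI
  rw [Finset.mul_sum, Finset.mul_sum, ← Finset.sum_add_distrib]
  exact Finset.sum_le_sum fun i hi => hle _ (hI.1 i hi).1 _ (hI.1 i hi).2

variable {E F : Type*} [NormedAddCommGroup E] [NormedSpace ℝ E] [NormedAddCommGroup F]
  [NormedSpace ℝ F] {a b : ℝ}

theorem absolutelyContinuousOnInterval_clm_apply {T : ℝ → E →L[ℝ] F} {f : ℝ → E}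
    (hT : AbsolutelyContinuousOnInterval T a b) (hf : AbsolutelyContinuousOnInterval f a b) :
    AbsolutelyContinuousOnInterval (fun t => T t (f t)) a b := by
  obtain ⟨C, hC⟩ := hT.exists_bound
  obtain ⟨D, hD⟩ := hf.exists_bound
  refine absolutelyContinuousOnInterval_of_dist_le hf hT (C := C) (D := D) fun x hx y hy => ?_
  have hsplit : T x (f x) - T y (f y) = T x (f x - f y) + (T x - T y) (f y) := by
    rw [map_sub, sub_apply]
    abel
  rw [dist_eq_norm, dist_eq_norm, dist_eq_norm, hsplit]
  calc ‖T x (f x - f y) + (T x - T y) (f y)‖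
      ≤ ‖T x‖ * ‖f x - f y‖ + ‖T x - T y‖ * ‖f y‖ :=
        (norm_add_le _ _).trans (add_le_add ((T x).le_opNorm _) ((T x - T y).le_opNorm _))
    _ ≤ C * ‖f x - f y‖ + D * ‖T x - T y‖ := by
        rw [mul_comm ‖T x - T y‖]
        gcongr
        exacts [hC x hx, hD y hy]

theorem absolutelyContinuousOnInterval_intervalIntegral {g : ℝ → E}
    (hg : IntervalIntegrable g volume a b) :
    AbsolutelyContinuousOnInterval (fun x => ∫ t in a..x, g t) a b := by
  have hnorm := hg.norm.absolutelyContinuousOnInterval_intervalIntegral Set.left_mem_uIcc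
  refine absolutelyContinuousOnInterval_of_dist_le hnorm hnorm (C := 1) (D := 0)
    fun x hx y hy => ?_
  have hgi : ∀ z ∈ Set.uIcc a b, IntervalIntegrable g volume a z := fun z hz =>
    hg.mono_set (Set.uIcc_subset_uIcc_left hz)
  rw [one_mul, zero_mul, add_zero, dist_eq_norm, Real.dist_eq,
    intervalIntegral.integral_interval_sub_left (hgi x hx) (hgi y hy),
    intervalIntegral.integral_interval_sub_left (hgi x hx).norm (hgi y hy).norm]
  exact intervalIntegral.norm_integral_le_abs_integral_norm

theorem eq_add_integral_of_ae_hasDerivAt [CompleteSpace E] {f g : ℝ → E}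
    (hf : AbsolutelyContinuousOnInterval f a b) (hg : IntervalIntegrable g volume a b)
    (hfg : ∀ᵐ t, t ∈ Set.uIcc a b → HasDerivAt f (g t) t) :
    f b = f a + ∫ t in a..b, g t := by
  obtain ⟨c, hc⟩ := (hf.sub
    (absolutelyContinuousOnInterval_intervalIntegral hg)).const_of_ae_hasDerivAt_zero (by
      filter_upwards [hfg, hg.ae_hasDerivAt_integral] with t hft hgt ht
      simpa only [sub_self] using (hft ht).sub (hgt ht a Set.left_mem_uIcc))
  have ha := hc a Set.left_mem_uIcc
  have hb := hc b Set.right_mem_uIcc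
  rw [Pi.sub_apply, intervalIntegral.integral_same, sub_zero] at ha
  rw [Pi.sub_apply, ← ha] at hb
  exact sub_eq_iff_eq_add.mp hb

end AbsoluteContinuity

theorem intervalIntegrable_bilin_of_continuousOn {E F G : Type*} [NormedAddCommGroup E]
    [NormedSpace ℝ E] [NormedAddCommGroup F] [NormedSpace ℝ F] [NormedAddCommGroup G]
    [NormedSpace ℝ G]
    (B : E →L[ℝ] F →L[ℝ] G) {f : ℝ → E} {g : ℝ → F} {a b : ℝ}
    (hf : ContinuousOn f (Set.uIcc a b)) (hg : IntervalIntegrable g volume a b) :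
    IntervalIntegrable (fun t => B (f t) (g t)) volume a b := by
  obtain ⟨C, hC⟩ := isCompact_uIcc.exists_bound_of_continuousOn hf
  refine intervalIntegrable_iff.mpr (B.integrable_of_bilin_of_bdd_left C
    ((hf.mono Set.uIoc_subset_uIcc).aestronglyMeasurable measurableSet_uIoc) ?_ hg.def')
  exact ae_restrict_of_forall_mem measurableSet_uIoc fun t ht => hC t (Set.uIoc_subset_uIcc ht)

/-- `f` is an indefinite integral of `g` on `s`: between any two points of `s` the function `g` is
integrable and its integral is the increment of `f`. This is the sense in which `f' = g` holds for
Carathéodory solutions of differential equations. -/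
structure IsPrimitiveOn {E : Type*} [NormedAddCommGroup E] [NormedSpace ℝ E]
    (f g : ℝ → E) (s : Set ℝ) : Prop where
  intervalIntegrable : ∀ x ∈ s, ∀ y ∈ s, IntervalIntegrable g volume x y
  eq_add_integral : ∀ x ∈ s, ∀ y ∈ s, f y = f x + ∫ t in x..y, g t

namespace IsPrimitiveOn

variable {E F G : Type*} [NormedAddCommGroup E] [NormedSpace ℝ E] [NormedAddCommGroup F]
  [NormedSpace ℝ F] [NormedAddCommGroup G] {f g : ℝ → E} {k : ℝ → G} {s : Set ℝ} {a b : ℝ}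

theorem mono {s' : Set ℝ} (h : IsPrimitiveOn f g s) (hs : s' ⊆ s) : IsPrimitiveOn f g s' :=
  ⟨fun x hx y hy => h.intervalIntegrable x (hs hx) y (hs hy),
    fun x hx y hy => h.eq_add_integral x (hs hx) y (hs hy)⟩

theorem sub {f' g' : ℝ → E} (h : IsPrimitiveOn f g s) (h' : IsPrimitiveOn f' g' s) :
    IsPrimitiveOn (fun t => f t - f' t) (fun t => g t - g' t) s where
  intervalIntegrable x hx y hy :=
    (h.intervalIntegrable x hx y hy).sub (h'.intervalIntegrable x hx y hy)
  eq_add_integral x hx y hy := by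
    rw [intervalIntegral.integral_sub (h.intervalIntegrable x hx y hy)
      (h'.intervalIntegrable x hx y hy), h.eq_add_integral x hx y hy, h'.eq_add_integral x hx y hy]
    abel

theorem absolutelyContinuousOnInterval (h : IsPrimitiveOn f g (Set.uIcc a b)) :
    AbsolutelyContinuousOnInterval f a b := by
  have hint := absolutelyContinuousOnInterval_intervalIntegral
    (h.intervalIntegrable a Set.left_mem_uIcc b Set.right_mem_uIcc)
  refine absolutelyContinuousOnInterval_of_dist_le hint hint (C := 1) (D := 0)
    fun x hx y hy => ?_
  rw [h.eq_add_integral a Set.left_mem_uIcc x hx, h.eq_add_integral a Set.left_mem_uIcc y hy,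
    dist_add_left, one_mul, zero_mul, add_zero]

theorem continuousOn_uIcc (h : IsPrimitiveOn f g (Set.uIcc a b)) :
    ContinuousOn f (Set.uIcc a b) :=
  h.absolutelyContinuousOnInterval.continuousOn

theorem ae_hasDerivAt [CompleteSpace E] (h : IsPrimitiveOn f g (Set.uIcc a b)) :
    ∀ᵐ t, t ∈ Set.uIcc a b → HasDerivAt f (g t) t := by
  have hint := h.intervalIntegrable a Set.left_mem_uIcc b Set.right_mem_uIcc
  filter_upwards [hint.ae_hasDerivAt_integral, Measure.ae_ne volume (min a b),
    Measure.ae_ne volume (max a b)] with t hderiv hmin hmax ht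
  refine ((hderiv ht a Set.left_mem_uIcc).const_add (f a)).congr_of_eventuallyEq ?_
  filter_upwards [Icc_mem_nhds (ht.1.lt_of_ne hmin.symm) (ht.2.lt_of_ne hmax)] with x hx
  exact h.eq_add_integral a Set.left_mem_uIcc x hx

theorem of_hasDerivAt [CompleteSpace E] (hs : s.OrdConnected)
    (hf : ∀ t ∈ s, HasDerivAt f (g t) t)
    (hg : ∀ x ∈ s, ∀ y ∈ s, IntervalIntegrable g volume x y) : IsPrimitiveOn f g s := by
  refine ⟨hg, fun x hx y hy => ?_⟩
  rw [intervalIntegral.integral_eq_sub_of_hasDerivAt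
    (fun t ht => hf t (hs.uIcc_subset hx hy ht)) (hg x hx y hy), add_sub_cancel]

theorem clm_apply [CompleteSpace E] [CompleteSpace F] (hs : s.OrdConnected)
    {T T' : ℝ → E →L[ℝ] F} (hT : IsPrimitiveOn T T' s) (hf : IsPrimitiveOn f g s) :
    IsPrimitiveOn (fun t => T t (f t)) (fun t => T' t (f t) + T t (g t)) s := by
  have hint : ∀ x ∈ s, ∀ y ∈ s,
      IntervalIntegrable (fun t => T' t (f t) + T t (g t)) volume x y := by
    intro x hx y hy
    have hxy := hs.uIcc_subset hx hy
    exact (intervalIntegrable_bilin_of_continuousOn (ContinuousLinearMap.id ℝ (E →L[ℝ] F)).flip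
      (hf.mono hxy).continuousOn_uIcc (hT.intervalIntegrable x hx y hy)).add
      (intervalIntegrable_bilin_of_continuousOn (ContinuousLinearMap.id ℝ (E →L[ℝ] F))
        (hT.mono hxy).continuousOn_uIcc (hf.intervalIntegrable x hx y hy))
  refine ⟨hint, fun x hx y hy => ?_⟩
  have hTxy := hT.mono (hs.uIcc_subset hx hy)
  have hfxy := hf.mono (hs.uIcc_subset hx hy)
  refine eq_add_integral_of_ae_hasDerivAt (absolutelyContinuousOnInterval_clm_apply
    hTxy.absolutelyContinuousOnInterval hfxy.absolutelyContinuousOnInterval) (hint x hx y hy) ?_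
  filter_upwards [hTxy.ae_hasDerivAt, hfxy.ae_hasDerivAt] with t hTt hft ht
  exact (hTt ht).clm_apply (hft ht)

theorem norm_le_two_mul_norm (h : IsPrimitiveOn f g (Set.uIcc a b))
    (hk : IntervalIntegrable k volume a b)
    (hgk : ∀ t ∈ Set.uIcc a b, ‖g t‖ ≤ ‖k t‖ * ‖f t‖)
    (hsmall : |∫ t in a..b, ‖k t‖| ≤ 1 / 2) : ‖f b‖ ≤ 2 * ‖f a‖ := by
  obtain ⟨m, hm, hmax⟩ := isCompact_uIcc.exists_isMaxOn ⟨a, Set.left_mem_uIcc⟩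
    h.continuousOn_uIcc.norm
  have hIoc : Set.uIoc a m ⊆ Set.uIoc a b :=
    Set.uIoc_subset_uIoc_of_uIcc_subset_uIcc (Set.uIcc_subset_uIcc_left hm)
  have hincr : ‖f m - f a‖ ≤ 1 / 2 * ‖f m‖ :=
    calc ‖f m - f a‖ = ‖∫ t in a..m, g t‖ := by
          rw [h.eq_add_integral a Set.left_mem_uIcc m hm, add_sub_cancel_left]
      _ ≤ |∫ t in a..m, ‖k t‖ * ‖f m‖| := by
          refine intervalIntegral.norm_integral_le_abs_of_norm_le
            (ae_restrict_of_forall_mem measurableSet_uIoc fun t ht => ?_)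
            ((hk.mono_set (Set.uIcc_subset_uIcc_left hm)).norm.mul_const _)
          have ht' := Set.uIoc_subset_uIcc (hIoc ht)
          exact (hgk t ht').trans (by gcongr; exact hmax ht')
      _ = |∫ t in a..m, ‖k t‖| * ‖f m‖ := by
          rw [intervalIntegral.integral_mul_const, abs_mul, abs_norm]
      _ ≤ 1 / 2 * ‖f m‖ := by
          gcongr
          exact (intervalIntegral.abs_integral_mono_interval hIoc
            (ae_of_all _ fun t => norm_nonneg _) hk.norm).trans hsmall
  have hb : ‖f b‖ ≤ ‖f m‖ := hmax Set.right_mem_uIcc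
  linarith [norm_sub_norm_le (f m) (f a)]

theorem eq_zero_of_eq_zero (h : IsPrimitiveOn f g s) (hs : IsOpen s) (hsc : s.OrdConnected)
    (hk : ∀ x ∈ s, ∀ y ∈ s, IntervalIntegrable k volume x y)
    (hgk : ∀ t ∈ s, ‖g t‖ ≤ ‖k t‖ * ‖f t‖) (ha : a ∈ s) (hb : b ∈ s) (hfa : f a = 0) :
    f b = 0 := by
  suffices ∀ x ∈ s, ∀ᶠ y in 𝓝[s] x, ‖f y‖ ≤ 2 * ‖f x‖ ∧ ‖f x‖ ≤ 2 * ‖f y‖ by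
    refine hsc.isPreconnected.induction₂' (fun x y => f x = 0 → f y = 0) (fun x hx => ?_)
      (fun _ _ _ _ _ _ hxy hyz => hyz ∘ hxy) ha hb hfa
    filter_upwards [this x hx] with y hy
    exact ⟨fun h0 => by simpa [h0] using hy.1, fun h0 => by simpa [h0] using hy.2⟩
  intro x hx
  obtain ⟨r, hr, hrs⟩ := Metric.nhds_basis_closedBall.mem_iff.mp (hs.mem_nhds hx)
  rw [Real.closedBall_eq_Icc, ← Set.uIcc_of_le (by linarith)] at hrs
  have hxr : Set.uIcc (x - r) (x + r) ∈ 𝓝 x := by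
    rw [Set.uIcc_of_le (by linarith)]
    exact Icc_mem_nhds (by linarith) (by linarith)
  have hcont : ContinuousAt (fun y => |∫ t in x..y, ‖k t‖|) x :=
    ((intervalIntegral.continuousOn_primitive_interval' (hk _ (hrs Set.left_mem_uIcc) _
      (hrs Set.right_mem_uIcc)).norm (mem_of_mem_nhds hxr)).continuousAt hxr).abs
  have hsmall : ∀ᶠ y in 𝓝 x, |∫ t in x..y, ‖k t‖| < 1 / 2 :=
    hcont.eventually_lt continuousAt_const (by simp)
  filter_upwards [nhdsWithin_le_nhds hsmall, self_mem_nhdsWithin] with y hxy hy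
  have hsub := hsc.uIcc_subset hx hy
  have hsub' := hsc.uIcc_subset hy hx
  refine ⟨(h.mono hsub).norm_le_two_mul_norm (hk x hx y hy) (fun t ht => hgk t (hsub ht)) hxy.le,
    (h.mono hsub').norm_le_two_mul_norm (hk y hy x hx) (fun t ht => hgk t (hsub' ht)) ?_⟩
  rw [intervalIntegral.integral_symm, abs_neg]
  exact hxy.le

theorem exists_forall_norm_le_two_mul_norm (h : IsPrimitiveOn f g (Set.Ici a))
    (hk : IntegrableOn k (Set.Ioi a)) (hgk : ∀ t ∈ Set.Ici a, ‖g t‖ ≤ ‖k t‖ * ‖f t‖) :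
    ∃ X ≥ a, ∀ x ≥ X, ∀ y ≥ X, ‖f y‖ ≤ 2 * ‖f x‖ := by
  have htail : Tendsto (fun X => ∫ t in Set.Ioi X, ‖k t‖) atTop (𝓝 0) :=
    tendsto_integral_Ioi_zero tendsto_id
  obtain ⟨X, hX, haX⟩ :=
    ((htail.eventually_le_const (by norm_num : (0 : ℝ) < 1 / 2)).and (eventually_ge_atTop a)).exists
  refine ⟨X, haX, fun x hx y hy => ?_⟩
  have hsub : Set.uIcc x y ⊆ Set.Ici a := Set.ordConnected_Ici.uIcc_subset
    (haX.trans hx) (haX.trans hy)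
  have hIoc : Set.uIoc x y ⊆ Set.Ioi X := fun t ht => (le_min hx hy).trans_lt ht.1
  have hkX := hk.mono_set (Set.Ioi_subset_Ioi haX)
  refine (h.mono hsub).norm_le_two_mul_norm
    (intervalIntegrable_iff.mpr (hkX.mono_set hIoc)) (fun t ht => hgk t (hsub ht)) ?_
  rw [intervalIntegral.abs_intervalIntegral_eq,
    abs_of_nonneg (integral_nonneg fun _ => norm_nonneg _)]
  exact (setIntegral_mono_set hkX.norm (ae_of_all _ fun _ => norm_nonneg _)
    hIoc.eventuallyLE).trans hX

theorem tendsto_atTop_of_integrableOn [CompleteSpace E] (h : IsPrimitiveOn f g (Set.Ici a))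
    (hg : IntegrableOn g (Set.Ioi a)) :
    Tendsto f atTop (𝓝 (f a + ∫ t in Set.Ioi a, g t)) := by
  refine ((intervalIntegral_tendsto_integral_Ioi a hg tendsto_id).const_add (f a)).congr' ?_
  filter_upwards [eventually_ge_atTop a] with x hx
  exact (h.eq_add_integral a Set.self_mem_Ici x hx).symm

theorem integrableOn_Ioi_of_norm_le (h : IsPrimitiveOn f g (Set.Ici a))
    (hk : IntegrableOn k (Set.Ioi a)) (hgk : ∀ t ∈ Set.Ici a, ‖g t‖ ≤ ‖k t‖) :
    IntegrableOn g (Set.Ioi a) := by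
  have hmeas : AEStronglyMeasurable g (volume.restrict (Set.Ioi a)) :=
    (aecover_Iic tendsto_id).aestronglyMeasurable fun x => by
      rw [Measure.restrict_restrict measurableSet_Iic, Set.inter_comm, Set.Ioi_inter_Iic]
      rcases le_total a x with hax | hxa
      · exact (h.intervalIntegrable a Set.self_mem_Ici x hax).1.aestronglyMeasurable
      · simp [Set.Ioc_eq_empty_of_le hxa]
  exact hk.norm.mono' hmeas
    (ae_restrict_of_forall_mem measurableSet_Ioi fun t ht => hgk t (Set.mem_Ioi.mp ht).le)

theorem exists_tendsto_of_norm_le [CompleteSpace E] (h : IsPrimitiveOn f g (Set.Ici a))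
    (hk : IntegrableOn k (Set.Ioi a)) (hgk : ∀ t ∈ Set.Ici a, ‖g t‖ ≤ ‖k t‖ * ‖f t‖) :
    ∃ L, Tendsto f atTop (𝓝 L) ∧ (L = 0 → ∀ᶠ t in atTop, f t = 0) := by
  obtain ⟨X, haX, hX⟩ := h.exists_forall_norm_le_two_mul_norm hk hgk
  have hfX := h.mono (Set.Ici_subset_Ici.mpr haX)
  have hlim := hfX.tendsto_atTop_of_integrableOn <| hfX.integrableOn_Ioi_of_norm_le
    ((hk.mono_set (Set.Ioi_subset_Ioi haX)).norm.mul_const (2 * ‖f X‖)) fun t ht => by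
      rw [norm_mul, norm_norm, norm_mul, norm_norm, Real.norm_two]
      exact (hgk t (haX.trans ht)).trans (by gcongr; exact hX X le_rfl t ht)
  refine ⟨_, hlim, fun hL => ?_⟩
  rw [hL] at hlim
  filter_upwards [eventually_ge_atTop X] with t ht
  have hle : ‖f t‖ ≤ 2 * ‖(0 : E)‖ := ge_of_tendsto (hlim.norm.const_mul 2) <| by
    filter_upwards [eventually_ge_atTop X] with x hx using hX x hx t ht
  simpa using hle

end IsPrimitiveOn

section HarrisLutz

variable {E : Type*} [NormedAddCommGroup E] [NormedSpace ℝ E]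

theorem isPrimitiveOn_of_integral_eq [CompleteSpace E] {A : ℝ → E →L[ℝ] E} {u : ℝ → E}
    {s : Set ℝ} (hs : s.OrdConnected) (hA : ∀ x ∈ s, ∀ y ∈ s, IntervalIntegrable A volume x y)
    (hu : ∀ x ∈ s, ∀ y ∈ s, u y = u x + ∫ t in x..y, A t (u t)) :
    IsPrimitiveOn u (fun t => A t (u t)) s := by
  refine ⟨fun x hx y hy => ?_, hu⟩
  by_contra hxy
  -- Non-integrable functions have integral `0`. If this happens between `x` and `y`, it also
  -- happens on one side of every `z`, so `u z = u x`; but for constant `u` the integrand is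
  -- integrable.
  have hconst : ∀ z ∈ s, u z = u x := by
    intro z hz
    by_cases hxz : IntervalIntegrable (fun t => A t (u t)) volume x z
    · have hzy : ¬IntervalIntegrable (fun t => A t (u t)) volume z y := fun h => hxy (hxz.trans h)
      have hy' := hu z hz y hy
      have hy'' := hu x hx y hy
      rw [intervalIntegral.integral_undef hzy, add_zero] at hy'
      rw [intervalIntegral.integral_undef hxy, add_zero] at hy''
      exact hy'.symm.trans hy''
    · rw [hu x hx z hz, intervalIntegral.integral_undef hxz, add_zero]
  have hAx : IntervalIntegrable (fun t => A t (u x)) volume x y :=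
    intervalIntegrable_iff.mpr
      ((ContinuousLinearMap.apply ℝ E (u x)).integrable_comp (hA x hx y hy).def')
  refine hxy (hAx.congr fun t ht => ?_)
  rw [hconst t (hs.uIcc_subset hx hy (Set.uIoc_subset_uIcc ht))]

theorem exists_tendsto_of_harrisLutz [CompleteSpace E] {A W W' : ℝ → E →L[ℝ] E} {u : ℝ → E}
    {c : ℝ} (hA : ∀ x ∈ Set.Ioi c, ∀ y ∈ Set.Ioi c, IntervalIntegrable A volume x y)
    (hu : IsPrimitiveOn u (fun t => A t (u t)) (Set.Ioi c))
    (hW : IsPrimitiveOn W W' (Set.Ioi c)) (hW0 : Tendsto W atTop (𝓝 0))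
    (hK : IntegrableAtFilter (fun t => A t - W' t - W t * A t) atTop) :
    ∃ L, Tendsto u atTop (𝓝 L) ∧ ((∃ x, c < x ∧ u x ≠ 0) → L ≠ 0) := by
  set K : ℝ → E →L[ℝ] E := fun t => A t - W' t - W t * A t with hKdef
  set v : ℝ → E := fun t => u t - W t (u t) with hv
  have hv' : IsPrimitiveOn v (fun t => K t (u t)) (Set.Ioi c) := by
    convert! hu.sub (hW.clm_apply Set.ordConnected_Ioi hu) using 2 with t
    simp only [hKdef, sub_apply, mul_apply_eq_comp]
    exact sub_sub _ _ _
  have hW_small : ∀ᶠ t in atTop, ‖W t‖ ≤ 1 / 2 :=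
    (tendsto_zero_iff_norm_tendsto_zero.mp hW0).eventually_le_const (by norm_num)
  obtain ⟨b, hKb⟩ := integrableAtFilter_atTop_iff.mp hK
  obtain ⟨a, ha⟩ := eventually_atTop.mp
    (hW_small.and ((eventually_gt_atTop c).and (eventually_ge_atTop b)))
  have huv : ∀ t ∈ Set.Ici a, ‖u t‖ ≤ 2 * ‖v t‖ := fun t ht => by
    have hWu : ‖W t (u t)‖ ≤ 1 / 2 * ‖u t‖ := (W t).le_of_opNorm_le (ha t ht).1 _
    linarith [norm_sub_norm_le (u t) (W t (u t))]
  obtain ⟨L, hvL, hL0⟩ := (hv'.mono fun t ht => (ha t ht).2.1).exists_tendsto_of_norm_le (a := a)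
    ((hKb.mono_set fun t ht => (ha t (Set.mem_Ioi.mp ht).le).2.2).norm.const_mul 2) fun t ht =>
      calc ‖K t (u t)‖ ≤ ‖K t‖ * (2 * ‖v t‖) := (K t).le_opNorm_of_le (huv t ht)
        _ = ‖2 * ‖K t‖‖ * ‖v t‖ := by rw [norm_mul, norm_norm, Real.norm_two]; ring
  have hWu : Tendsto (fun t => W t (u t)) atTop (𝓝 0) := by
    have hbound : Tendsto (fun t => ‖W t‖ * (2 * ‖v t‖)) atTop (𝓝 0) := by
      simpa using hW0.norm.mul (hvL.norm.const_mul 2)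
    refine squeeze_zero_norm' ?_ hbound
    filter_upwards [eventually_ge_atTop a] with t ht using (W t).le_opNorm_of_le (huv t ht)
  refine ⟨L, by simpa [hv] using hvL.add hWu, ?_⟩
  rintro ⟨x, hx, hux⟩ rfl
  obtain ⟨t, hvt, hat⟩ := ((hL0 rfl).and (eventually_ge_atTop a)).exists
  have hut : u t = 0 := by simpa [hvt] using huv t hat
  exact hux (hu.eq_zero_of_eq_zero isOpen_Ioi Set.ordConnected_Ioi hA
    (fun s _ => (A s).le_opNorm _) (ha t hat).2.1 hx hut)

end HarrisLutz

section Sinusoid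

/-- The trigonometric polynomial `t ↦ cos (ω t) P + sin (ω t) Q` of frequency `ω` with vector
coefficients. With `P` and `Q` the values of `M` at `0` and `π / 2`, it is `t ↦ M (ω t)`. -/
noncomputable def sinusoid {V : Type*} [AddCommGroup V] [Module ℝ V] (ω : ℝ) (P Q : V) (t : ℝ) :
    V :=
  cos (ω * t) • P + sin (ω * t) • Q

variable {V : Type*} [NormedAddCommGroup V] [NormedSpace ℝ V] {ω : ℝ} {P Q : V}

theorem hasDerivAt_sinusoid_antideriv (hω : ω ≠ 0) (t : ℝ) :
    HasDerivAt (sinusoid ω (ω⁻¹ • -Q) (ω⁻¹ • P)) (sinusoid ω P Q t) t := by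
  have hlin : HasDerivAt (fun x => ω * x) ω t := by simpa using (hasDerivAt_id t).const_mul ω
  refine ((hlin.cos.smul_const (ω⁻¹ • -Q)).add (hlin.sin.smul_const (ω⁻¹ • P))).congr_deriv ?_
  rw [sinusoid]
  match_scalars <;> field_simp

theorem norm_sinusoid_le (t : ℝ) : ‖sinusoid ω P Q t‖ ≤ ‖P‖ + ‖Q‖ := by
  refine norm_add_le_of_le ?_ ?_ <;> rw [norm_smul, Real.norm_eq_abs]
  · exact mul_le_of_le_one_left (norm_nonneg _) (abs_cos_le_one _)
  · exact mul_le_of_le_one_left (norm_nonneg _) (abs_sin_le_one _)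

theorem continuous_sinusoid : Continuous (sinusoid ω P Q) := by
  unfold sinusoid
  fun_prop

theorem integrable_smul_sinusoid {μ : Measure ℝ} {f : ℝ → ℝ} (hf : Integrable f μ) :
    Integrable (fun t => f t • sinusoid ω P Q t) μ :=
  hf.smul_bdd _ continuous_sinusoid.aestronglyMeasurable (ae_of_all _ norm_sinusoid_le)

end Sinusoid

section OscillatingSystem

theorem intervalIntegrable_of_forall_integrableOn_Ioi {V : Type*} [NormedAddCommGroup V]
    {f : ℝ → V} {c x y : ℝ} (hf : ∀ a > c, IntegrableOn f (Set.Ioi a)) (hx : c < x) (hy : c < y) :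
    IntervalIntegrable f volume x y := by
  obtain ⟨a, hca, ha⟩ := exists_between (lt_min hx hy)
  exact intervalIntegrable_iff.mpr ((hf a hca).mono_set fun t ht => ha.trans ht.1)

variable {E : Type*} [NormedAddCommGroup E] [NormedSpace ℝ E] {P Q : E →L[ℝ] E}
  {R : ℝ → E →L[ℝ] E} {u : ℝ → E} {ω : ℝ}

theorem integrable_harrisLutz_remainder {μ : Measure ℝ} {ρ ρ' : ℝ → ℝ} {C : ℝ}
    {P' Q' : E →L[ℝ] E} (hρ : AEStronglyMeasurable ρ μ) (hρC : ∀ᵐ t ∂μ, ‖ρ t‖ ≤ C)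
    (hρ' : Integrable ρ' μ) (hρ2 : Integrable (fun t => ρ t ^ 2) μ) (hR : Integrable R μ) :
    Integrable (fun t => (ρ t • sinusoid ω P Q t + R t)
      - (ρ t • sinusoid ω P Q t + ρ' t • sinusoid ω P' Q' t)
      - ρ t • sinusoid ω P' Q' t * (ρ t • sinusoid ω P Q t + R t)) μ := by
  have hSR : Integrable (fun t => sinusoid ω P' Q' t * R t) μ :=
    (ContinuousLinearMap.mul ℝ (E →L[ℝ] E)).integrable_of_bilin_of_bdd_left _
      continuous_sinusoid.aestronglyMeasurable (ae_of_all _ norm_sinusoid_le) hR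
  have hSO : Integrable (fun t => ρ t ^ 2 • sinusoid ω P' Q' t * sinusoid ω P Q t) μ :=
    (ContinuousLinearMap.mul ℝ (E →L[ℝ] E)).integrable_of_bilin_of_bdd_right _
      (integrable_smul_sinusoid hρ2) continuous_sinusoid.aestronglyMeasurable
      (ae_of_all _ norm_sinusoid_le)
  have hρ'S : Integrable (fun t => ρ' t • sinusoid ω P' Q' t) μ := integrable_smul_sinusoid hρ'
  refine (((hR.sub hρ'S).sub hSO).sub
    (hSR.bdd_smul C hρ hρC)).congr (ae_of_all _ fun t => ?_)
  simp only [Pi.sub_apply, Pi.smul_apply', mul_add, smul_mul_assoc, mul_smul_comm, smul_smul, sq]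
  abel

theorem exists_tendsto_of_decaying_sinusoid [CompleteSpace E] {ρ ρ' : ℝ → ℝ} {c : ℝ} (hω : ω ≠ 0)
    (hρ : ∀ t > c, HasDerivAt ρ (ρ' t) t) (hρ' : ∀ a > c, IntegrableOn ρ' (Set.Ioi a))
    (hρ2 : ∀ a > c, IntegrableOn (fun t => ρ t ^ 2) (Set.Ioi a)) (hρ0 : Tendsto ρ atTop (𝓝 0))
    (hR : ∀ a > c, IntegrableOn R (Set.Ioi a))
    (hu : ∀ x y, c < x → c < y →
      u y = u x + ∫ t in x..y, (ρ t • sinusoid ω P Q t + R t) (u t)) :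
    ∃ L, Tendsto u atTop (𝓝 L) ∧ ((∃ x, c < x ∧ u x ≠ 0) → L ≠ 0) := by
  let S : ℝ → E →L[ℝ] E := sinusoid ω (ω⁻¹ • -Q) (ω⁻¹ • P)
  have hρcont : ContinuousOn ρ (Set.Ioi c) := fun t ht => (hρ t ht).continuousAt.continuousWithinAt
  have hρP : ∀ x ∈ Set.Ioi c, ∀ y ∈ Set.Ioi c,
      IntervalIntegrable (fun t => ρ t • sinusoid ω P Q t) volume x y := fun x hx y hy =>
    ((hρcont.mono (Set.ordConnected_Ioi.uIcc_subset hx hy)).smul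
      continuous_sinusoid.continuousOn).intervalIntegrable
  have hA : ∀ x ∈ Set.Ioi c, ∀ y ∈ Set.Ioi c,
      IntervalIntegrable (fun t => ρ t • sinusoid ω P Q t + R t) volume x y :=
    fun x hx y hy => (hρP x hx y hy).add (intervalIntegrable_of_forall_integrableOn_Ioi hR hx hy)
  have hW : IsPrimitiveOn (fun t => ρ t • S t)
      (fun t => ρ t • sinusoid ω P Q t + ρ' t • S t) (Set.Ioi c) :=
    .of_hasDerivAt Set.ordConnected_Ioi
      (fun t ht => (hρ t ht).smul (hasDerivAt_sinusoid_antideriv (P := P) (Q := Q) hω t))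
      fun x hx y hy => (hρP x hx y hy).add (intervalIntegrable_of_forall_integrableOn_Ioi
        (fun a ha => integrable_smul_sinusoid (hρ' a ha)) hx hy)
  have hW0 : Tendsto (fun t => ρ t • S t) atTop (𝓝 0) :=
    hρ0.zero_smul_isBoundedUnder_le (isBoundedUnder_of ⟨_, norm_sinusoid_le⟩)
  refine exists_tendsto_of_harrisLutz hA
    (isPrimitiveOn_of_integral_eq Set.ordConnected_Ioi hA fun x hx y hy => hu x y hx hy) hW hW0 ?_
  obtain ⟨a, ha⟩ := eventually_atTop.mp
    ((hρ0.norm.eventually_le_const (by simp : ‖(0 : ℝ)‖ < 1)).and (eventually_gt_atTop c))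
  have hca : c < a := (ha a le_rfl).2
  have hsub : Set.Ioi a ⊆ Set.Ioi c := Set.Ioi_subset_Ioi hca.le
  refine ⟨Set.Ioi a, Ioi_mem_atTop a, integrable_harrisLutz_remainder (C := 1)
    ((hρcont.mono hsub).aestronglyMeasurable measurableSet_Ioi) ?_
    (hρ' a hca) (hρ2 a hca) (hR a hca)⟩
  exact ae_restrict_of_forall_mem measurableSet_Ioi fun t ht => (ha t (Set.mem_Ioi.mp ht).le).1

theorem solutions_have_limits_general [CompleteSpace E] {γ ε₀ : ℝ} (hγ : 1 / 2 < γ) (hε₀ : ε₀ ≠ 0)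
    (hR : ∀ a > 0, IntegrableOn R (Set.Ioi a))
    (hu : ∀ x y, 0 < x → 0 < y →
      u y = u x + ∫ t in x..y, ((t ^ γ)⁻¹ • sinusoid ε₀ P Q t + R t) (u t)) :
    ∃ L, Tendsto u atTop (𝓝 L) ∧ ((∃ x, 0 < x ∧ u x ≠ 0) → L ≠ 0) := by
  have hderiv : ∀ t > 0, HasDerivAt (fun t : ℝ => (t ^ γ)⁻¹) (-γ * t ^ (-γ - 1)) t := fun t ht =>
    (hasDerivAt_rpow_const (Or.inl ht.ne')).congr_of_eventuallyEq <| by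
      filter_upwards [Ioi_mem_nhds ht] with x hx using (rpow_neg (le_of_lt hx) γ).symm
  have hsq : ∀ a > 0, IntegrableOn (fun t : ℝ => (t ^ γ)⁻¹ ^ 2) (Set.Ioi a) := fun a ha =>
    (integrableOn_Ioi_rpow_of_lt (by linarith : -γ * 2 < -1) ha).congr_fun (fun t ht => by
      have ht0 : 0 ≤ t := (ha.trans ht).le
      simp only [rpow_mul ht0, rpow_neg ht0, rpow_two]) measurableSet_Ioi
  exact exists_tendsto_of_decaying_sinusoid hε₀ hderiv
    (fun a ha => (integrableOn_Ioi_rpow_of_lt (by linarith) ha).const_mul (-γ)) hsq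
    (tendsto_rpow_atTop (by linarith)).inv_tendsto_atTop hR hu

end OscillatingSystem

section MatrixSystem

/-- The action of complex matrices on vectors, as a continuous real-bilinear map. -/
noncomputable def mulVecCLM {m n : Type*} [Fintype m] [Fintype n] :
    Matrix m n ℂ →L[ℝ] (n → ℂ) →L[ℝ] m → ℂ :=
  LinearMap.toContinuousBilinearMap (Matrix.mulVecBilin ℝ ℝ)

theorem integrable_mulVecCLM {m n : Type*} [Fintype m] [Fintype n] {R : ℝ → Matrix m n ℂ}
    {μ : Measure ℝ} (hR : ∀ i j, Integrable (fun t => R t i j) μ) :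
    Integrable (fun t => mulVecCLM (R t)) μ := by
  have hRpi : Integrable (fun t i j => R t i j) μ := .of_eval fun i => .of_eval fun j => hR i j
  -- `Matrix m n ℂ` has no global norm; `m → n → ℂ` is the same topological vector space.
  exact ContinuousLinearMap.integrable_comp (H := m → n → ℂ) mulVecCLM hRpi

theorem integrableOn_of_norm_le_div_rpow {V : Type*} [NormedAddCommGroup V] {f : ℝ → V} {c α : ℝ}
    (hα : 0 < α) (hf : AEStronglyMeasurable f (volume.restrict (Set.Ioi 0)))
    (hle : ∀ x > 0, ‖f x‖ ≤ c / (x + 1) ^ (1 + α)) : IntegrableOn f (Set.Ioi 0) := by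
  refine ((integrableOn_add_rpow_Ioi_of_lt (by linarith : -(1 + α) < -1)
    (by norm_num : -(1 : ℝ) < 0)).const_mul c).mono' hf
    (ae_restrict_of_forall_mem measurableSet_Ioi fun x (hx : 0 < x) => (hle x hx).trans_eq ?_)
  rw [rpow_neg (by linarith), div_eq_mul_inv]

theorem mulVec_eq_sinusoid (β γ ω t : ℝ) (R : Matrix (Fin 2) (Fin 2) ℂ) (v : Fin 2 → ℂ) :
    (((β / t ^ γ : ℝ) : ℂ) • (!![(Real.cos (ω * t) : ℂ), (Real.sin (ω * t) : ℂ);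
        (Real.sin (ω * t) : ℂ), (-(Real.cos (ω * t)) : ℂ)] : Matrix (Fin 2) (Fin 2) ℂ)
      + R).mulVec v =
    ((t ^ γ)⁻¹ • sinusoid ω (mulVecCLM (β • (!![1, 0; 0, -1] : Matrix (Fin 2) (Fin 2) ℂ)))
        (mulVecCLM (β • (!![0, 1; 1, 0] : Matrix (Fin 2) (Fin 2) ℂ))) t
      + mulVecCLM R) v := by
  simp only [sinusoid, ← map_smul mulVecCLM, ← map_add mulVecCLM]
  change _ = Matrix.mulVec _ v
  congr 2
  ext i j
  fin_cases i <;> fin_cases j <;> simp [div_eq_mul_inv] <;> ring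

end MatrixSystem

/-- For `ε₀ ≠ 0` every solution of the oscillating model system has a finite limit
at `+∞`, nonzero for every nonzero solution. -/
theorem solutions_have_limits (β γ ε₀ c_r α : ℝ) (hβ : 0 < β)
    (hγ : γ ∈ Set.Ioo (1/2:ℝ) 1) (hε₀ : ε₀ ≠ 0) (hcr : 0 < c_r) (hα : 0 < α)
    (R : ℝ → Matrix (Fin 2) (Fin 2) ℂ)
    (hRmeas : ∀ i j, Measurable fun x => R x i j)
    (hR : ∀ x : ℝ, 0 ≤ x → ∀ i j, ‖R x i j‖ ≤ c_r / (x + 1) ^ (1 + α))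
    (u : ℝ → (Fin 2 → ℂ))
    (hu : ∀ x y : ℝ, 0 < x → 0 < y →
      u y = u x + ∫ t in x..y,
        ((((β / t ^ γ : ℝ) : ℂ) •
            (!![(Real.cos (ε₀*t) : ℂ), (Real.sin (ε₀*t) : ℂ);
                (Real.sin (ε₀*t) : ℂ), (-(Real.cos (ε₀*t)) : ℂ)] : Matrix (Fin 2) (Fin 2) ℂ)
          + R t)).mulVec (u t)) :
    ∃ L : Fin 2 → ℂ, Tendsto u atTop (𝓝 L) ∧ ((∃ x, 0 < x ∧ u x ≠ 0) → L ≠ 0) := by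
  have hRint : IntegrableOn (fun t => mulVecCLM (R t)) (Set.Ioi 0) :=
    integrable_mulVecCLM fun i j => integrableOn_of_norm_le_div_rpow hα
      (hRmeas i j).aestronglyMeasurable fun x hx => hR x hx.le i j
  simp only [mulVec_eq_sinusoid] at hu
  exact solutions_have_limits_general hγ.1 hε₀
    (fun a ha => hRint.mono_set (Set.Ioi_subset_Ioi ha.le)) hu
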